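/- arXiv:2007.15725 — 2 statements merged into one kernel-verified Lean document; each statement's English description precedes it below -/
import Mathlib

section
/- Let p ∈ I and S' ⊆ J with |S'∖S_p| ≤ u − 1, and assume p < m or |S_m| < n − l. If S_p ⊆ S', |S'∖S_{p−1}| ≥ u whenever p ≥ 2, |S'| ≥ u + 1, and S' ∩ (S_{p+1}∖S_p) ≠ ∅ whenever p ≤ m − 1, then the mixing inequality Mix≤(S',p) defines a facet of conv(X^{l,u}). -/
open Finset

noncomputable section

def Xset (n m l u : ℕ) (S : Fin m → Finset (Fin n)) : Set ((Fin n → ℝ) × (Fin m → ℝ)) :=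
  {zd | (∀ j, zd.1 j = 0 ∨ zd.1 j = 1) ∧ (∀ i, zd.2 i = 0 ∨ zd.2 i = 1) ∧
        (∀ i, zd.2 i = ∏ j ∈ S i, (1 - zd.1 j)) ∧
        (l : ℝ) ≤ ∑ j, zd.1 j ∧ ∑ j, zd.1 j ≤ (u : ℝ)}

def Dset (n m l u : ℕ) (S : Fin m → Finset (Fin n)) : Set (Fin m → ℝ) :=
  Prod.snd '' Xset n m l u S

def Xfiber (n m l u : ℕ) (S : Fin m → Finset (Fin n)) (δ : Fin m → ℝ) :
    Set (Fin n → ℝ) :=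
  {z | (z, δ) ∈ Xset n m l u S}

/-- The family is closed under nonempty intersection. -/
def ClosedInter (n m : ℕ) (S : Fin m → Finset (Fin n)) : Prop :=
  ∀ i j : Fin m, (S i ∩ S j).Nonempty → ∃ k, S i ∩ S j = S k

/-- The family is proper. -/
def ProperFam (n m l u : ℕ) (S : Fin m → Finset (Fin n)) : Prop :=
  ClosedInter n m S ∧
  ∃ D : Finset (Fin m → ℝ), (D : Set (Fin m → ℝ)) = Dset n m l u S ∧ D.card = m + 1 ∧
    AffineIndependent ℝ (Subtype.val : {x : Fin m → ℝ // x ∈ D} → (Fin m → ℝ))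

/-- `f x ≤ c` is valid and defines a facet of `conv P`. -/
def IsFacet {E : Type*} [AddCommGroup E] [Module ℝ E] (P : Set E) (f : E → ℝ) (c : ℝ) :
    Prop :=
  (∀ x ∈ P, f x ≤ c) ∧
  Module.finrank ℝ (affineSpan ℝ {x ∈ convexHull ℝ P | f x = c}).direction + 1 =
    Module.finrank ℝ (affineSpan ℝ P).direction

def SS (n m : ℕ) (S : Fin m → Finset (Fin n)) : ℕ → Finset (Fin n) :=
  fun k => if h : 1 ≤ k ∧ k ≤ m then S ⟨k - 1, by omega⟩ else if k = 0 then ∅ else Finset.univ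

def dd (m : ℕ) (δ : Fin m → ℝ) : ℕ → ℝ :=
  fun k => if h : 1 ≤ k ∧ k ≤ m then δ ⟨k - 1, by omega⟩ else if k = 0 then 1 else 0

def mixLeLHS (n m u : ℕ) (S : Fin m → Finset (Fin n)) (p : ℕ) (S' : Finset (Fin n))
    (zd : (Fin n → ℝ) × (Fin m → ℝ)) : ℝ :=
  ∑ j ∈ S', zd.1 j + ((u : ℝ) - ((S' \ SS n m S p).card : ℝ)) * dd m zd.2 p
    + ∑ i ∈ Finset.Icc (p + 1) m,
        (((S' \ SS n m S (i - 1)).card : ℝ) - ((S' \ SS n m S i).card : ℝ)) * dd m zd.2 i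

def MixLe (n m u : ℕ) (S : Fin m → Finset (Fin n)) (p : ℕ) (S' : Finset (Fin n))
    (zd : (Fin n → ℝ) × (Fin m → ℝ)) : Prop :=
  mixLeLHS n m u S p S' zd ≤ (u : ℝ)

def mixGeLHS (n m l : ℕ) (S : Fin m → Finset (Fin n)) (p : ℕ) (S' : Finset (Fin n))
    (zd : (Fin n → ℝ) × (Fin m → ℝ)) : ℝ :=
  (((S' ∪ SS n m S p).card : ℝ) - (n : ℝ) + (l : ℝ)) * dd m zd.2 p
    + ∑ i ∈ Finset.Icc (p + 1) m,
        (((S' ∪ SS n m S i).card : ℝ) - ((S' ∪ SS n m S (i - 1)).card : ℝ)) * dd m zd.2 i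
    - ∑ j ∈ S', zd.1 j

def MixGe (n m l : ℕ) (S : Fin m → Finset (Fin n)) (p : ℕ) (S' : Finset (Fin n))
    (zd : (Fin n → ℝ) × (Fin m → ℝ)) : Prop :=
  mixGeLHS n m l S p S' zd ≤ 0

def NestedLin (n m l u : ℕ) (S : Fin m → Finset (Fin n))
    (zd : (Fin n → ℝ) × (Fin m → ℝ)) : Prop :=
  ((l : ℝ) ≤ ∑ j, zd.1 j) ∧ (∑ j, zd.1 j ≤ (u : ℝ)) ∧
  (∀ i : Fin m, ∀ j ∈ S i, zd.1 j + zd.2 i ≤ 1) ∧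
  (1 ≤ dd m zd.2 1 + ∑ j ∈ SS n m S 1, zd.1 j) ∧
  (0 ≤ dd m zd.2 m) ∧
  (∀ j, 0 ≤ zd.1 j) ∧
  (∀ j, j ∉ SS n m S m → zd.1 j ≤ 1) ∧
  (∀ i : ℕ, 1 ≤ i → i + 1 ≤ m → dd m zd.2 (i + 1) ≤ dd m zd.2 i) ∧
  (∀ i : ℕ, 1 ≤ i → i + 1 ≤ m →
    dd m zd.2 i - dd m zd.2 (i + 1) ≤ ∑ j ∈ SS n m S (i + 1) \ SS n m S i, zd.1 j)

def FollowsPattern (n : ℕ) (α α' : Fin n → ℝ) : Prop :=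
  (∀ j, (0 ≤ α j → 0 ≤ α' j) ∧ (α j ≤ 0 → α' j ≤ 0)) ∧
  (∀ j₁ j₂ : Fin n, α j₂ ≤ α j₁ → α' j₂ ≤ α' j₁)

def IsFacetSet {E : Type*} [AddCommGroup E] [Module ℝ E] (P : Set E) (F : Set E) : Prop :=
  ∃ (f : E →ₗ[ℝ] ℝ) (c : ℝ), (∀ x ∈ P, f x ≤ c) ∧
    F = {x ∈ convexHull ℝ P | f x = c} ∧
    Module.finrank ℝ (affineSpan ℝ F).direction + 1 =
      Module.finrank ℝ (affineSpan ℝ P).direction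

/-!
The feasible points are the pairs `(𝟙_T, 𝟙_{i ≤ k})`, where `l ≤ |T| ≤ u` and the level `k` of `T`
is the largest index with `S_k` disjoint from `T`. By telescoping, the left-hand side of the mixing
inequality at such a point is `|S' ∩ T|` when `k < p` and `|S' ∩ T| + u - |S' \ S_k|` when `p ≤ k`,
so the inequality is valid, and it is tight when `T ⊆ S'`, `|T| = u` in the first case and when
`S' \ S_k ⊆ T` in the second.

For the facet property it suffices that every linear functional `f` which is constant on the tight
points is a multiple of the left-hand side `g`. Exchanging elements between tight sets of level `0`
shows that `f` takes a single value `a` on the unit vectors of `S'`. Then `f - a • g` vanishes on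
these unit vectors and is constant on the tight points. A tight set of level `0` shows that the
constant is `0`; adding an element outside `S'` to a tight set of level `p` shows that the remaining
unit vectors of the `z`-coordinates are annihilated too; and evaluating at one tight set of each
level `k` disposes of the `δ`-coordinates.
-/

section Facet

theorem mem_vectorSpan_of_forall_dual {K V : Type*} [Field K] [AddCommGroup V] [Module K V]
    {s : Set V} {w : V}
    (h : ∀ f : V →ₗ[K] K, (∀ x ∈ s, ∀ y ∈ s, f x = f y) → f w = 0) : w ∈ vectorSpan K s := by
  by_contra hw
  obtain ⟨f, hfw, hf⟩ := Submodule.exists_le_ker_of_notMem hw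
  refine hfw (h f fun x hx y hy => ?_)
  simpa [sub_eq_zero] using hf (vsub_mem_vectorSpan K hx hy)

theorem isFacet_of_forall_eq_smul {E : Type*} [AddCommGroup E] [Module ℝ E]
    [FiniteDimensional ℝ E] {P : Set E} {g : E →ₗ[ℝ] ℝ} {c : ℝ} (hvalid : ∀ x ∈ P, g x ≤ c)
    (htight : ∃ x ∈ P, g x = c) (hslack : ∃ x ∈ P, g x ≠ c)
    (h : ∀ (f : E →ₗ[ℝ] ℝ) (γ : ℝ), (∀ x ∈ P, g x = c → f x = γ) → ∃ a : ℝ, f = a • g) :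
    IsFacet P g c := by
  obtain ⟨x₀, hx₀, hgx₀⟩ := htight
  obtain ⟨x₁, hx₁, hgx₁⟩ := hslack
  have hg : g ≠ 0 := by
    rintro rfl
    exact hgx₁ hgx₀
  have hface : vectorSpan ℝ {x ∈ convexHull ℝ P | g x = c} = LinearMap.ker g := by
    refine le_antisymm ?_ fun w hw => mem_vectorSpan_of_forall_dual fun f hf => ?_
    · rw [vectorSpan_def, Submodule.span_le]
      rintro _ ⟨x, hx, y, hy, rfl⟩
      simp [hx.2, hy.2]
    · obtain ⟨a, rfl⟩ := h f (f x₀) fun x hx hgx =>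
        hf x ⟨subset_convexHull ℝ P hx, hgx⟩ x₀ ⟨subset_convexHull ℝ P hx₀, hgx₀⟩
      simp [LinearMap.mem_ker.mp hw]
  have hspan : vectorSpan ℝ P = ⊤ := by
    refine eq_top_iff.mpr fun w _ => mem_vectorSpan_of_forall_dual fun f hf => ?_
    obtain ⟨a, rfl⟩ := h f (f x₀) fun x hx _ => hf x hx x₀ hx₀
    have ha : a = 0 := by simpa [hgx₀, hgx₁] using hf x₁ hx₁ x₀ hx₀
    simp [ha]
  refine ⟨hvalid, ?_⟩
  rw [direction_affineSpan, direction_affineSpan, hface, hspan, finrank_top]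
  exact Module.Dual.finrank_ker_add_one_of_ne_zero hg

end Facet

section Level

variable {ι : Type*} {s : ℕ → Finset ι} {m k : ℕ} {T : Finset ι}

/-- For a chain `s 0 ⊆ ⋯ ⊆ s m` with `s 0 = ∅`, this says that `k` is the largest index in `0, …, m`
for which `s k` is disjoint from `T`. If `T` is the support of `z`, then `k` is the number of
monomials `∏ j ∈ s i, (1 - z j)`, `1 ≤ i ≤ m`, that do not vanish. -/
structure IsLevel (s : ℕ → Finset ι) (m : ℕ) (T : Finset ι) (k : ℕ) : Prop where
  le : k ≤ m
  disjoint : Disjoint (s k) T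
  not_disjoint_succ : k < m → ¬ Disjoint (s (k + 1)) T

theorem exists_isLevel (m : ℕ) (hs0 : s 0 = ∅) (T : Finset ι) : ∃ k, IsLevel s m T k := by
  classical
  exact ⟨Nat.findGreatest (fun i => Disjoint (s i) T) m, Nat.findGreatest_le m,
    Nat.findGreatest_spec (P := fun i => Disjoint (s i) T) m.zero_le (by simp [hs0]),
    fun h => Nat.findGreatest_is_greatest (P := fun i => Disjoint (s i) T) (Nat.lt_succ_self _) h⟩

theorem IsLevel.disjoint_iff (h : IsLevel s m T k) (hs : MonotoneOn s (Set.Iic m)) {i : ℕ}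
    (hi : i ≤ m) : Disjoint (s i) T ↔ i ≤ k := by
  constructor
  · intro hd
    by_contra! hki
    exact h.not_disjoint_succ (hki.trans_le hi) (hd.mono_left (hs (hki.trans_le hi) hi hki))
  · exact fun hik => h.disjoint.mono_left (hs hi h.le hik)

variable [DecidableEq ι]

theorem IsLevel.insert (h : IsLevel s m T k) {j : ι} (hj : j ∉ s k) :
    IsLevel s m (insert j T) k where
  le := h.le
  disjoint := disjoint_insert_right.mpr ⟨hj, h.disjoint⟩
  not_disjoint_succ hk hd := h.not_disjoint_succ hk (hd.mono_right (subset_insert j T))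

theorem exists_isLevel_card_eq {C D : Finset ι} {t : ℕ} (hk : k ≤ m) (hCD : C ⊆ D \ s k)
    (hC : k < m → ¬ Disjoint (s (k + 1)) C) (hCt : #C ≤ t) (htD : t ≤ #(D \ s k)) :
    ∃ T, C ⊆ T ∧ T ⊆ D ∧ #T = t ∧ IsLevel s m T k := by
  obtain ⟨T, hCT, hTD, hT⟩ := exists_subsuperset_card_eq hCD hCt htD
  exact ⟨T, hCT, hTD.trans sdiff_subset, hT, hk, disjoint_of_subset_right hTD disjoint_sdiff,
    fun h hd => hC h (hd.mono_right hCT)⟩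

theorem exists_isLevel_subset_card_eq {D : Finset ι} {t : ℕ} (hs : s k ⊂ s (k + 1)) (hk : k < m)
    (hsD : s (k + 1) ⊆ D) (ht : 1 ≤ t) (htD : t ≤ #(D \ s k)) :
    ∃ T ⊆ D, #T = t ∧ IsLevel s m T k := by
  obtain ⟨e, he, he'⟩ := exists_of_ssubset hs
  obtain ⟨T, -, hT⟩ := exists_isLevel_card_eq (C := {e}) hk.le (by simp [hsD he, he'])
    (by simp [he]) (by simpa using ht) htD
  exact ⟨T, hT⟩

end Level

section TightSets

variable {ι : Type*} [DecidableEq ι] {s : ℕ → Finset ι} {m l u p k : ℕ} {S' T : Finset ι}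

/-- `T` has level `k` and its feasible point attains equality in the mixing inequality
`Mix≤(S', p)` of the chain `s`. -/
structure IsTight (s : ℕ → Finset ι) (m l u p : ℕ) (S' T : Finset ι) (k : ℕ) : Prop where
  isLevel : IsLevel s m T k
  le_card : l ≤ #T
  card_le : #T ≤ u
  of_lt : k < p → T ⊆ S' ∧ #T = u
  of_le : p ≤ k → S' \ s k ⊆ T

theorem IsLevel.isTight_of_lt (h : IsLevel s m T k) (hkp : k < p) (hlu : l ≤ u) (hT : T ⊆ S')
    (hTu : #T = u) : IsTight s m l u p S' T k :=
  ⟨h, hTu ▸ hlu, hTu.le, fun _ => ⟨hT, hTu⟩, fun hpk => absurd hkp hpk.not_gt⟩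

theorem IsLevel.isTight_of_le (h : IsLevel s m T k) (hpk : p ≤ k) (hl : l ≤ #T) (hu : #T ≤ u)
    (hT : S' \ s k ⊆ T) : IsTight s m l u p S' T k :=
  ⟨h, hl, hu, fun hkp => absurd hkp hpk.not_gt, fun _ => hT⟩

theorem exists_isTight_of_lt (hs : StrictMonoOn s (Set.Iic m)) (hkp : k < p) (hpm : p ≤ m)
    (hlu : l ≤ u) (hu : 1 ≤ u) (hpS' : s p ⊆ S') (hpred : u ≤ #(S' \ s (p - 1))) :
    ∃ T, IsTight s m l u p S' T k := by
  have hkm : k + 1 ≤ m := by omega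
  have hsk : s k ⊆ s (p - 1) := hs.monotoneOn (Set.mem_Iic.mpr (by omega))
    (Set.mem_Iic.mpr (by omega)) (Nat.le_sub_one_of_lt hkp)
  obtain ⟨T, hT, hTu, hlevel⟩ := exists_isLevel_subset_card_eq
    (hs (Nat.le_of_lt hkm) hkm k.lt_succ_self) hkm ((hs.monotoneOn hkm hpm hkp).trans hpS') hu
    (hpred.trans (card_le_card (sdiff_subset_sdiff Subset.rfl hsk)))
  exact ⟨T, hlevel.isTight_of_lt hkp hlu hT hTu⟩

variable [Fintype ι]

theorem exists_isTight_of_le (hs : StrictMonoOn s (Set.Iic m)) (hpk : p ≤ k) (hkm : k ≤ m)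
    (hlu : l ≤ u) (hl : l ≤ #(s m)ᶜ) (hp : #(S' \ s p) < u) :
    ∃ T, IsTight s m l u p S' T k := by
  obtain ⟨C, hS'C, hCs, hCsucc, hCu⟩ : ∃ C, S' \ s k ⊆ C ∧ C ⊆ univ \ s k ∧
      (k < m → ¬ Disjoint (s (k + 1)) C) ∧ #C ≤ u := by
    have hk : #(S' \ s k) < u := (card_le_card (sdiff_subset_sdiff Subset.rfl
      (hs.monotoneOn (hpk.trans hkm) hkm hpk))).trans_lt hp
    have hsub : S' \ s k ⊆ univ \ s k := sdiff_subset_sdiff (subset_univ _) Subset.rfl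
    rcases hkm.lt_or_eq with hlt | rfl
    · obtain ⟨e, he, he'⟩ := exists_of_ssubset (hs hkm hlt k.lt_succ_self)
      exact ⟨insert e (S' \ s k), subset_insert _ _, insert_subset (by simp [he']) hsub,
        fun _ => not_disjoint_iff.mpr ⟨e, he, mem_insert_self _ _⟩, (card_insert_le _ _).trans hk⟩
    · exact ⟨S' \ s k, Subset.rfl, hsub, fun h => absurd h (lt_irrefl k), hk.le⟩
  have hlk : l ≤ #(univ \ s k) := hl.trans (card_le_card
    (sdiff_subset_sdiff Subset.rfl (hs.monotoneOn hkm (Set.mem_Iic.mpr le_rfl) hkm)))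
  obtain ⟨T, hCT, -, hT, hlevel⟩ := exists_isLevel_card_eq (t := max l #C) hkm hCs hCsucc
    (le_max_right _ _) (max_le hlk (card_le_card hCs))
  exact ⟨T, hlevel.isTight_of_le hpk (by omega) (by omega) (hS'C.trans hCT)⟩

theorem exists_isTight_insert (hpm : p ≤ m) (hlu : l < u) (hl : l < #(s p)ᶜ)
    (hp : #(S' \ s p) < u) (hpS' : s p ⊆ S') (hsucc : p < m → (S' ∩ (s (p + 1) \ s p)).Nonempty)
    {j : ι} (hj : j ∉ S') :
    ∃ T, j ∉ T ∧ IsTight s m l u p S' T p ∧ IsTight s m l u p S' (insert j T) p := by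
  have hjp : j ∉ s p := fun h => hj (hpS' h)
  have hsub : S' \ s p ⊆ univ.erase j \ s p := fun x hx => by
    rw [mem_sdiff] at hx
    simp [hx.2, ne_of_mem_of_not_mem hx.1 hj]
  have hmeet : p < m → ¬ Disjoint (s (p + 1)) (S' \ s p) := fun h => by
    obtain ⟨e, he⟩ := hsucc h
    rw [mem_inter, mem_sdiff] at he
    exact not_disjoint_iff.mpr ⟨e, he.2.1, mem_sdiff.mpr ⟨he.1, he.2.2⟩⟩
  have hcard : #(univ.erase j \ s p) = #(s p)ᶜ - 1 := by
    rw [erase_sdiff_comm, ← compl_eq_univ_sdiff, card_erase_of_mem (mem_compl.mpr hjp)]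
  obtain ⟨T, hS'T, hTj, hT, hlevel⟩ := exists_isLevel_card_eq (t := max l #(S' \ s p)) hpm hsub
    hmeet (le_max_right _ _) (max_le (by omega) (card_le_card hsub))
  have hjT : j ∉ T := fun h => by simpa using hTj h
  have hTu : #T < u := hT ▸ max_lt hlu hp
  have hcardInsert : #(insert j T) = #T + 1 := card_insert_of_notMem hjT
  exact ⟨T, hjT, hlevel.isTight_of_le le_rfl (by omega) hTu.le hS'T,
    (hlevel.insert hjp).isTight_of_le le_rfl (by omega) (by omega)
      (hS'T.trans (subset_insert j T))⟩

end TightSets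

section LevelPoint

variable {ι : Type*}

/-- The 0-1 point whose `z`-part is the indicator of `T` and whose `δ`-part consists of `k` ones
followed by zeros. When `T` has level `k` this is the feasible point with support `T`. -/
def levelPoint (m : ℕ) (T : Finset ι) (k : ℕ) : (ι → ℝ) × (Fin m → ℝ) :=
  ((T : Set ι).indicator 1, fun i => if i.val < k then 1 else 0)

theorem levelPoint_empty_zero (m : ℕ) : levelPoint m (∅ : Finset ι) 0 = 0 := by
  ext <;> simp [levelPoint]

theorem levelPoint_insert [DecidableEq ι] {m k : ℕ} {T : Finset ι} {j : ι} (hj : j ∉ T) :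
    levelPoint m (insert j T) k = (Pi.single j 1, 0) + levelPoint m T k := by
  ext i
  · rcases eq_or_ne i j with rfl | hij
    · simp [levelPoint, hj]
    · simp [levelPoint, hij, Set.indicator_apply]
  · simp [levelPoint]

theorem map_levelPoint [DecidableEq ι] {m : ℕ} {N : Type*} [AddCommGroup N] [Module ℝ N]
    (f : (ι → ℝ) × (Fin m → ℝ) →ₗ[ℝ] N) (T : Finset ι) (k : ℕ) :
    f (levelPoint m T k) = ∑ j ∈ T, f (Pi.single j 1, 0) + f (levelPoint m ∅ k) := by
  induction T using Finset.induction_on with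
  | empty => simp
  | insert j T hj ih => rw [levelPoint_insert hj, map_add, ih, sum_insert hj, add_assoc]

theorem linearMap_ext_levelPoint [Finite ι] [DecidableEq ι] {m : ℕ} {N : Type*} [AddCommGroup N]
    [Module ℝ N] {f g : (ι → ℝ) × (Fin m → ℝ) →ₗ[ℝ] N}
    (hz : ∀ j, f (Pi.single j 1, 0) = g (Pi.single j 1, 0))
    (hδ : ∀ k ≤ m, f (levelPoint m ∅ k) = g (levelPoint m ∅ k)) : f = g := by
  refine LinearMap.prod_ext (LinearMap.pi_ext' fun j => LinearMap.ext_ring (hz j))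
    (LinearMap.pi_ext' fun i => LinearMap.ext_ring ?_)
  have hsub : ((0, Pi.single i 1) : (ι → ℝ) × (Fin m → ℝ)) =
      levelPoint m ∅ (i + 1) - levelPoint m ∅ i := by
    ext t
    · simp [levelPoint]
    · simp only [levelPoint, Prod.snd_sub, Pi.sub_apply, Pi.single_apply, Fin.ext_iff]
      split_ifs <;> first | omega | simp
  change f (0, Pi.single i 1) = g (0, Pi.single i 1)
  rw [hsub, map_sub, map_sub, hδ _ i.isLt, hδ _ i.isLt.le]

theorem prod_one_sub_indicator [DecidableEq ι] {R : Type*} [CommRing R] (A T : Finset ι) :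
    ∏ j ∈ A, (1 - (T : Set ι).indicator (1 : ι → R) j) = if Disjoint A T then 1 else 0 := by
  split_ifs with h
  · exact prod_eq_one fun j hj => by simp [disjoint_left.mp h hj]
  · obtain ⟨e, heA, heT⟩ := not_disjoint_iff.mp h
    exact prod_eq_zero heA (by simp [heT])

theorem sum_indicator_one_eq_card_inter [DecidableEq ι] {R : Type*} [NonAssocSemiring R]
    (A T : Finset ι) : ∑ j ∈ A, (T : Set ι).indicator (1 : ι → R) j = #(A ∩ T) := by
  simp [Set.indicator_apply]

end LevelPoint

section Rigidity

theorem exists_forall_eq_of_forall_sum_eq {ι M : Type*} [AddCommMonoid M] [IsRightCancelAdd M]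
    {A : ι → M} {γ : M} {u : ℕ} {R S : Finset ι} (hRS : R ⊆ S) (hR : 1 < #R) (hu : 2 ≤ u)
    (huS : u < #S) (h : ∀ T ⊆ S, #T = u → ¬ Disjoint R T → ∑ j ∈ T, A j = γ) :
    ∃ a, ∀ j ∈ S, A j = a := by
  classical
  suffices hexchange : ∀ x ∈ S, ∀ y ∈ S, x ≠ y → A x = A y by
    obtain ⟨x, hx⟩ := card_pos.mp (u.zero_le.trans_lt huS)
    exact ⟨A x, fun y hy => (eq_or_ne y x).elim (congrArg A) (hexchange y hy x hx)⟩
  intro x hx y hy hxy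
  obtain ⟨C, hCS, hCcard, hCx, hCy⟩ : ∃ C ⊆ (S.erase x).erase y, #C ≤ 1 ∧
      ¬ Disjoint R (insert x C) ∧ ¬ Disjoint R (insert y C) := by
    by_cases hr : ∃ r ∈ R, r ≠ x ∧ r ≠ y
    · obtain ⟨r, hr, hrx, hry⟩ := hr
      exact ⟨{r}, by simp [hRS hr, hrx, hry], by simp, by simp [hr], by simp [hr]⟩
    · push Not at hr
      obtain ⟨r, hrR, hrx⟩ := exists_mem_ne hR x
      obtain ⟨r', hrR', hry'⟩ := exists_mem_ne hR y
      have hyR : y ∈ R := hr r hrR hrx ▸ hrR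
      have hxR : x ∈ R := not_imp_comm.mp (hr r' hrR') hry' ▸ hrR'
      exact ⟨∅, by simp, by simp, by simp [hxR], by simp [hyR]⟩
  have hcard : #((S.erase x).erase y) = #S - 2 := by
    rw [card_erase_of_mem (mem_erase.mpr ⟨hxy.symm, hy⟩), card_erase_of_mem hx, Nat.sub_sub]
  obtain ⟨Q, hCQ, hQS, hQ⟩ := exists_subsuperset_card_eq (n := u - 1) hCS (by omega) (by omega)
  have hsum : ∀ w ∈ S, w ∉ Q → ¬ Disjoint R (insert w C) → A w + ∑ j ∈ Q, A j = γ := by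
    intro w hw hwQ hwC
    rw [← sum_insert hwQ]
    refine h _ (insert_subset hw (hQS.trans ((erase_subset _ _).trans (erase_subset _ _)))) ?_
      fun hd => hwC (hd.mono_right (insert_subset_insert w hCQ))
    rw [card_insert_of_notMem hwQ, hQ]
    omega
  have hxQ : x ∉ Q := fun hxQ => by simpa using hQS hxQ
  have hyQ : y ∉ Q := fun hyQ => by simpa using hQS hyQ
  exact add_right_cancel ((hsum x hx hxQ hCx).trans (hsum y hy hyQ hCy).symm)

variable {ι : Type*} [DecidableEq ι] {s : ℕ → Finset ι} {m l u p : ℕ} {S' : Finset ι}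

theorem exists_forall_single_eq_of_forall_isTight {f : (ι → ℝ) × (Fin m → ℝ) →ₗ[ℝ] ℝ} {γ : ℝ}
    (hs0 : s 0 = ∅) (hsS' : s 1 ⊆ S') (hs1 : 1 < #(s 1)) (hp : 0 < p) (hlu : l ≤ u) (hu : 2 ≤ u)
    (hS' : u < #S') (hf : ∀ T k, IsTight s m l u p S' T k → f (levelPoint m T k) = γ) :
    ∃ a, ∀ j ∈ S', f (Pi.single j 1, 0) = a := by
  refine exists_forall_eq_of_forall_sum_eq hsS' hs1 hu hS' (γ := γ) fun T hT hTu hTs => ?_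
  have hlevel : IsLevel s m T 0 := ⟨m.zero_le, by simp [hs0], fun _ => hTs⟩
  have hfT := hf T 0 (hlevel.isTight_of_lt hp hlu hT hTu)
  rwa [map_levelPoint, levelPoint_empty_zero, map_zero, add_zero] at hfT

theorem eq_zero_of_forall_isTight [Finite ι] {f : (ι → ℝ) × (Fin m → ℝ) →ₗ[ℝ] ℝ} {γ : ℝ}
    (hp : 0 < p) (hlevel : ∀ k ≤ m, ∃ T, IsTight s m l u p S' T k)
    (hinsert : ∀ j ∉ S', ∃ T, j ∉ T ∧ IsTight s m l u p S' T p ∧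
      IsTight s m l u p S' (insert j T) p)
    (hf : ∀ T k, IsTight s m l u p S' T k → f (levelPoint m T k) = γ)
    (hfS' : ∀ j ∈ S', f (Pi.single j 1, 0) = 0) : f = 0 := by
  have hγ : γ = 0 := by
    obtain ⟨T, hT⟩ := hlevel 0 m.zero_le
    rw [← hf T 0 hT, map_levelPoint, levelPoint_empty_zero, map_zero, add_zero]
    exact sum_eq_zero fun j hj => hfS' j ((hT.of_lt hp).1 hj)
  have hz : ∀ j, f (Pi.single j 1, 0) = 0 := by
    intro j
    by_cases hj : j ∈ S'
    · exact hfS' j hj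
    · obtain ⟨T, hjT, hT, hjT'⟩ := hinsert j hj
      have hfT := hf _ _ hjT'
      rwa [levelPoint_insert hjT, map_add, hf T p hT, add_eq_right] at hfT
  refine linearMap_ext_levelPoint hz fun k hk => ?_
  obtain ⟨T, hT⟩ := hlevel k hk
  simpa [map_levelPoint f T, hz, hγ] using hf T k hT

end Rigidity

section NestedFamily

variable {n m l u : ℕ} {S : Fin m → Finset (Fin n)}

theorem SS_zero : SS n m S 0 = ∅ := by
  simp [SS]

theorem SS_succ (i : Fin m) : SS n m S (i + 1) = S i := by
  have hi : i.val + 1 ≤ m := i.isLt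
  simp [SS, hi]

theorem strictMonoOn_SS (hS : StrictMono S) (hS1 : (SS n m S 1).Nonempty) :
    StrictMonoOn (SS n m S) (Set.Iic m) := by
  refine strictMonoOn_of_lt_add_one Set.ordConnected_Iic fun i _ _ hi => ?_
  have him : i < m := hi
  cases i with
  | zero => rwa [SS_zero, Nat.zero_add, ← bot_eq_empty, bot_lt_iff_ne_bot, bot_eq_empty,
      ← nonempty_iff_ne_empty]
  | succ i =>
    rw [SS_succ ⟨i, by omega⟩, SS_succ ⟨i + 1, him⟩]
    exact hS (by simp)

theorem IsLevel.levelPoint_snd_eq_prod (hs : MonotoneOn (SS n m S) (Set.Iic m))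
    {T : Finset (Fin n)} {k : ℕ} (h : IsLevel (SS n m S) m T k) (i : Fin m) :
    (levelPoint m T k).2 i = ∏ j ∈ S i, (1 - (T : Set (Fin n)).indicator (1 : Fin n → ℝ) j) := by
  simp only [levelPoint, prod_one_sub_indicator, ← SS_succ (S := S) i,
    h.disjoint_iff hs (Nat.succ_le_of_lt i.isLt), Nat.succ_le_iff]

theorem mem_Xset_iff_exists_isLevel (hs : MonotoneOn (SS n m S) (Set.Iic m))
    {x : (Fin n → ℝ) × (Fin m → ℝ)} :
    x ∈ Xset n m l u S ↔
      ∃ T k, IsLevel (SS n m S) m T k ∧ l ≤ #T ∧ #T ≤ u ∧ x = levelPoint m T k := by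
  have hsum : ∀ T : Finset (Fin n), ∑ j, (T : Set (Fin n)).indicator (1 : Fin n → ℝ) j = #T :=
    fun T => by rw [sum_indicator_one_eq_card_inter, univ_inter]
  constructor
  · obtain ⟨z, δ⟩ := x
    rintro ⟨hz, -, hδ, hl, hu⟩
    replace hz : ∀ j, z j = 0 ∨ z j = 1 := hz
    obtain ⟨T, rfl⟩ : ∃ T : Finset (Fin n), z = (T : Set (Fin n)).indicator 1 := by
      refine ⟨univ.filter (z · = 1), funext fun j => ?_⟩
      rcases hz j with h | h <;> simp [h]
    obtain ⟨k, hk⟩ := exists_isLevel m (SS_zero (S := S)) T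
    simp only [hsum, Nat.cast_le] at hl hu
    exact ⟨T, k, hk, hl, hu,
      Prod.ext rfl (funext fun i => (hδ i).trans (hk.levelPoint_snd_eq_prod hs i).symm)⟩
  · rintro ⟨T, k, hk, hl, hu, rfl⟩
    refine ⟨fun j => ?_, fun i => ?_, hk.levelPoint_snd_eq_prod hs, ?_, ?_⟩
    · exact Set.indicator_eq_zero_or_self _ _ j
    · exact (ite_eq_or_eq _ _ _).symm
    · simpa [levelPoint, hsum] using hl
    · simpa [levelPoint, hsum] using hu

end NestedFamily

section MixLe

theorem sum_Icc_sub_mul_ite {R : Type*} [Ring R] {p k m : ℕ} (hpk : p ≤ k) (hkm : k ≤ m)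
    (c : ℕ → R) :
    ∑ i ∈ Icc (p + 1) m, (c (i - 1) - c i) * (if i ≤ k then 1 else 0) = c p - c k := by
  have hfilter : {i ∈ Icc (p + 1) m | i ≤ k} = Ico (p + 1) (k + 1) := by
    ext i
    simp only [mem_filter, mem_Icc, mem_Ico]
    omega
  calc
    _ = ∑ i ∈ Ico (p + 1) (k + 1), (c (i - 1) - c i) := by
      simp only [mul_ite, mul_one, mul_zero, ← sum_filter, hfilter]
    _ = ∑ i ∈ Ico p k, (c i - c (i + 1)) := (sum_Ico_add' (fun i => c (i - 1) - c i) p k 1).symm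
    _ = c p - c k := by
      rw [← neg_inj, ← sum_neg_distrib, neg_sub, ← sum_Ico_sub c hpk]
      simp only [neg_sub]

variable {n m u p : ℕ} {S : Fin m → Finset (Fin n)} {S' : Finset (Fin n)}

/-- The linear functional `δ ↦ dd m δ k` for `1 ≤ k`. At `k = 0` it is `0`, whereas `dd` is the
constant `1`, which is not linear. -/
def deltaProj (m k : ℕ) : (Fin m → ℝ) →ₗ[ℝ] ℝ :=
  if h : 1 ≤ k ∧ k ≤ m then LinearMap.proj ⟨k - 1, by omega⟩ else 0

theorem deltaProj_apply {k : ℕ} (hk : 1 ≤ k) (δ : Fin m → ℝ) : deltaProj m k δ = dd m δ k := by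
  by_cases hkm : k ≤ m
  · simp [deltaProj, dd, hk, hkm]
  · simp [deltaProj, dd, hkm, Nat.ne_of_gt hk]

/-- The left-hand side of `Mix≤(S', p)` as a linear functional; it agrees with `mixLeLHS` when
`1 ≤ p`. -/
def mixLeForm (n m u : ℕ) (S : Fin m → Finset (Fin n)) (p : ℕ) (S' : Finset (Fin n)) :
    (Fin n → ℝ) × (Fin m → ℝ) →ₗ[ℝ] ℝ :=
  LinearMap.coprod (∑ j ∈ S', LinearMap.proj j)
    (((u : ℝ) - #(S' \ SS n m S p)) • deltaProj m p +
      ∑ i ∈ Icc (p + 1) m, ((#(S' \ SS n m S (i - 1)) : ℝ) - #(S' \ SS n m S i)) • deltaProj m i)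

theorem coe_mixLeForm (hp : 1 ≤ p) : ⇑(mixLeForm n m u S p S') = mixLeLHS n m u S p S' := by
  ext x
  have hsum : ∀ i ∈ Icc (p + 1) m, deltaProj m i x.2 = dd m x.2 i := fun i hi =>
    deltaProj_apply (by rw [mem_Icc] at hi; omega) _
  simp only [mixLeForm, mixLeLHS, LinearMap.coprod_apply, LinearMap.add_apply, LinearMap.sum_apply,
    LinearMap.smul_apply, LinearMap.proj_apply, smul_eq_mul, deltaProj_apply hp, add_assoc]
  rw [sum_congr (s₁ := Icc (p + 1) m) rfl fun i hi => by rw [hsum i hi]]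

theorem mixLeForm_single {j : Fin n} (hj : j ∈ S') :
    mixLeForm n m u S p S' (Pi.single j 1, 0) = 1 := by
  simp [mixLeForm, Pi.single_apply, hj]

theorem dd_levelPoint {T : Finset (Fin n)} {k i : ℕ} (hi : 1 ≤ i) (him : i ≤ m) :
    dd m (levelPoint m T k).2 i = if i ≤ k then 1 else 0 := by
  have hik : i - 1 < k ↔ i ≤ k := by omega
  simp [dd, levelPoint, hi, him, hik]

theorem mixLeLHS_levelPoint (hp : 1 ≤ p) (hpm : p ≤ m) (T : Finset (Fin n)) {k : ℕ} (hkm : k ≤ m) :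
    mixLeLHS n m u S p S' (levelPoint m T k) =
      #(S' ∩ T) + if k < p then 0 else (u : ℝ) - #(S' \ SS n m S k) := by
  have hdd : ∀ i ∈ Icc (p + 1) m, dd m (levelPoint m T k).2 i = if i ≤ k then 1 else 0 :=
    fun i hi => by
      rw [mem_Icc] at hi
      exact dd_levelPoint (by omega) hi.2
  have hz : ∑ j ∈ S', (levelPoint m T k).1 j = #(S' ∩ T) := sum_indicator_one_eq_card_inter S' T
  rw [mixLeLHS, hz, dd_levelPoint hp hpm, sum_congr rfl fun i hi => by rw [hdd i hi]]
  split_ifs with hpk hkp hkp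
  · omega
  · rw [sum_Icc_sub_mul_ite hpk hkm fun i => (#(S' \ SS n m S i) : ℝ)]
    ring
  · rw [sum_eq_zero fun i hi => ?_]
    · simp
    · rw [mem_Icc] at hi
      rw [if_neg (by omega), mul_zero]
  · omega

theorem IsLevel.mixLeLHS_le (hp : 1 ≤ p) (hpm : p ≤ m) {T : Finset (Fin n)} {k : ℕ}
    (h : IsLevel (SS n m S) m T k) (hTu : #T ≤ u) :
    mixLeLHS n m u S p S' (levelPoint m T k) ≤ u := by
  rw [mixLeLHS_levelPoint hp hpm T h.le]
  split_ifs
  · simpa using (card_le_card inter_subset_right).trans hTu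
  · have hsub : S' ∩ T ⊆ S' \ SS n m S k :=
      subset_sdiff.mpr ⟨inter_subset_left, (h.disjoint.mono_right inter_subset_right).symm⟩
    have hcard : (#(S' ∩ T) : ℝ) ≤ #(S' \ SS n m S k) := mod_cast card_le_card hsub
    linarith

theorem IsTight.mixLeLHS_eq {l : ℕ} (hp : 1 ≤ p) (hpm : p ≤ m) {T : Finset (Fin n)} {k : ℕ}
    (h : IsTight (SS n m S) m l u p S' T k) :
    mixLeLHS n m u S p S' (levelPoint m T k) = u := by
  rw [mixLeLHS_levelPoint hp hpm T h.isLevel.le]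
  split_ifs with hkp
  · rw [inter_eq_right.mpr (h.of_lt hkp).1, (h.of_lt hkp).2, add_zero]
  · have hinter : S' ∩ T = S' \ SS n m S k := by
      refine Subset.antisymm ?_ (subset_inter sdiff_subset (h.of_le (not_lt.mp hkp)))
      exact subset_sdiff.mpr
        ⟨inter_subset_left, (h.isLevel.disjoint.mono_right inter_subset_right).symm⟩
    rw [hinter]
    ring

theorem isFacet_mixLeLHS_of_exists_isTight {l : ℕ} (hs : MonotoneOn (SS n m S) (Set.Iic m))
    (hp : 1 ≤ p) (hpm : p ≤ m) (hlu : l < u) (hu : 2 ≤ u) (hS1 : 1 < #(SS n m S 1))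
    (hS1S' : SS n m S 1 ⊆ S') (hS' : u < #S')
    (hlevel : ∀ k ≤ m, ∃ T, IsTight (SS n m S) m l u p S' T k)
    (hinsert : ∀ j ∉ S', ∃ T, j ∉ T ∧ IsTight (SS n m S) m l u p S' T p ∧
      IsTight (SS n m S) m l u p S' (insert j T) p) :
    IsFacet (Xset n m l u S) (mixLeLHS n m u S p S') u := by
  have hmem {T k} (hT : IsLevel (SS n m S) m T k) (hl : l ≤ #T) (hu : #T ≤ u) :
      levelPoint m T k ∈ Xset n m l u S :=
    (mem_Xset_iff_exists_isLevel hs).mpr ⟨T, k, hT, hl, hu, rfl⟩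
  have hform := coe_mixLeForm (n := n) (m := m) (u := u) (S := S) (S' := S') hp
  rw [← hform]
  refine isFacet_of_forall_eq_smul ?valid ?tight ?slack fun f γ hf => ?rigid
  case valid =>
    intro x hx
    obtain ⟨T, k, hT, -, hTu, rfl⟩ := (mem_Xset_iff_exists_isLevel hs).mp hx
    exact hform ▸ hT.mixLeLHS_le hp hpm hTu
  case tight =>
    obtain ⟨T, hT⟩ := hlevel 0 m.zero_le
    exact ⟨_, hmem hT.isLevel hT.le_card hT.card_le, hform ▸ hT.mixLeLHS_eq hp hpm⟩
  case slack =>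
    obtain ⟨T, hTS', hT, hlevel⟩ := exists_isLevel_subset_card_eq (s := SS n m S) (k := 0)
      (t := u - 1) (by simpa [SS_zero, card_pos] using hS1.le) (hp.trans hpm) hS1S' (by omega)
      (by rw [SS_zero, sdiff_empty]; omega)
    refine ⟨_, hmem hlevel (by omega) (by omega), ?_⟩
    rw [hform, mixLeLHS_levelPoint hp hpm T m.zero_le, inter_eq_right.mpr hTS', hT,
      if_pos (Nat.lt_of_succ_le hp), add_zero, Ne, Nat.cast_inj]
    omega
  case rigid =>
    have hf' : ∀ T k, IsTight (SS n m S) m l u p S' T k → f (levelPoint m T k) = γ :=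
      fun T k hT => hf _ (hmem hT.isLevel hT.le_card hT.card_le) (hform ▸ hT.mixLeLHS_eq hp hpm)
    obtain ⟨a, ha⟩ :=
      exists_forall_single_eq_of_forall_isTight SS_zero hS1S' hS1 hp hlu.le hu hS' hf'
    refine ⟨a, sub_eq_zero.mp (eq_zero_of_forall_isTight (γ := γ - a * u) hp hlevel hinsert
      (fun T k hT => ?_) fun j hj => ?_)⟩
    · rw [LinearMap.sub_apply, LinearMap.smul_apply, hf' T k hT, hform, hT.mixLeLHS_eq hp hpm,
        smul_eq_mul]
    · rw [LinearMap.sub_apply, LinearMap.smul_apply, ha j hj, mixLeForm_single hj, smul_eq_mul,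
        mul_one, sub_self]

end MixLe

theorem stmt15 (n m l u : ℕ) (S : Fin m → Finset (Fin n))
    (hn : 0 < n) (hm : 0 < m) (hu : 2 ≤ u) (hlu : l < u)
    (hnested : ∀ i j : Fin m, i < j → S i ⊂ S j)
    (hS1 : 2 ≤ (SS n m S 1).card)
    (hSm : l ≤ n - (SS n m S m).card)
    (p : ℕ) (hp1 : 1 ≤ p) (hpm : p ≤ m)
    (S' : Finset (Fin n)) (hS' : (S' \ SS n m S p).card ≤ u - 1)
    (hside : p < m ∨ (SS n m S m).card < n - l)
    (hU1 : SS n m S p ⊆ S')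
    (hU2 : 2 ≤ p → u ≤ (S' \ SS n m S (p - 1)).card)
    (hU3 : u + 1 ≤ S'.card)
    (hU4 : p < m → (S' ∩ (SS n m S (p + 1) \ SS n m S p)).Nonempty) :
    IsFacet (Xset n m l u S) (mixLeLHS n m u S p S') (u : ℝ) := by
  have hs : StrictMonoOn (SS n m S) (Set.Iic m) :=
    strictMonoOn_SS (fun i j => hnested i j) (card_pos.mp (by omega))
  have hcompl : #(SS n m S m)ᶜ = n - #(SS n m S m) := by rw [card_compl, Fintype.card_fin]
  have hlm : l ≤ #(SS n m S m)ᶜ := hcompl ▸ hSm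
  have hlp : l < #(SS n m S p)ᶜ := by
    rcases hpm.lt_or_eq with hlt | rfl
    · exact hlm.trans_lt
        (card_lt_card (compl_ssubset_compl.mpr (hs hpm (Set.mem_Iic.mpr le_rfl) hlt)))
    · omega
  have hpred : u ≤ #(S' \ SS n m S (p - 1)) := by
    rcases hp1.eq_or_lt with rfl | hp2
    · simpa [SS_zero] using Nat.le_of_succ_le hU3
    · exact hU2 hp2
  refine isFacet_mixLeLHS_of_exists_isTight hs.monotoneOn hp1 hpm hlu hu hS1
    ((hs.monotoneOn (hp1.trans hpm) hpm hp1).trans hU1) hU3 (fun k hk => ?_)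
    fun j hj => exists_isTight_insert hpm hlu hlp (by omega) hU1 hU4 hj
  rcases lt_or_ge k p with hkp | hpk
  · exact exists_isTight_of_lt hs hkp hpm hlu.le (by omega) hU1 hpred
  · exact exists_isTight_of_le hs hpk hk hlu.le hlm (by omega)
end
end

section
/- Let p ∈ I and S' ⊊ J with |S'∪S_{p−1}| ≤ n − l < |S'∪S_p|, and suppose the mixing inequality Mix≥(S',p) defines a facet of conv(X^{l,u}). Then (L1) S' ∩ S_p = ∅ and (L2) |S'| ≤ n − l − 1. -/
open Finset

noncomputable section

/-! If `f ≤ c` defines a nonempty facet of `conv P` on which a second equation `g = d` holds, and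
`g = d` fails somewhere on `P`, then for dimension reasons `g = d` holds nowhere on `P` outside
the facet.

At the point of `Xset` given by a set `T`, the mixing functional equals `-|S' ∩ T|` if `T` meets
`S_p`, and is at most `l - |T|` otherwise. So all points of its facet satisfy `z_j = 0` if some
`j` lies in `S' ∩ S_p`, and `∑ z_j = l` if `|S'| = n - l`. In both cases the equation also holds
at some `T` meeting both `S_p` and `S'`, where the functional is negative. -/

section Facet

lemma vectorSpan_le_ker {R M N : Type*} [Ring R] [AddCommGroup M] [Module R M] [AddCommGroup N]
    [Module R N] {s : Set M} {g : M →ₗ[R] N} {d : N} (hg : ∀ x ∈ s, g x = d) :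
    vectorSpan R s ≤ LinearMap.ker g := by
  rw [vectorSpan_def, Submodule.span_le]
  rintro _ ⟨x, hx, y, hy, rfl⟩
  simp [hg x hx, hg y hy]

variable {E N : Type*} [AddCommGroup E] [Module ℝ E] [AddCommGroup N] [Module ℝ N] {P : Set E}
  {g : E →ₗ[ℝ] N} {c : ℝ} {d : N}

lemma eq_of_mem_convexHull_of_eq {f : E →ₗ[ℝ] ℝ} (hf : ∀ x ∈ P, f x ≤ c)
    (hfg : ∀ x ∈ P, f x = c → g x = d) {x : E} (hx : x ∈ convexHull ℝ P) (hfx : f x = c) :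
    g x = d := by
  have hsub : convexHull ℝ P ⊆ {y | f y ≤ c ∧ (f y = c → g y = d)} := by
    refine convexHull_min (fun y hy ↦ ⟨hf y hy, hfg y hy⟩) (convex_iff_forall_pos.2 ?_)
    rintro y ⟨hfy, hgy⟩ z ⟨hfz, hgz⟩ a b ha hb hab
    have hle_y := mul_le_mul_of_nonneg_left hfy ha.le
    have hle_z := mul_le_mul_of_nonneg_left hfz hb.le
    have hc : a * c + b * c = c := by rw [← add_mul, hab, one_mul]
    simp only [Set.mem_ofPred_eq, map_add, map_smul, smul_eq_mul]
    refine ⟨by linarith [hc], fun h ↦ ?_⟩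
    have hfy' : f y = c := mul_left_cancel₀ ha.ne' (by linarith [hc])
    have hfz' : f z = c := mul_left_cancel₀ hb.ne' (by linarith [hc])
    rw [hgy hfy', hgz hfz', ← add_smul, hab, one_smul]
  exact (hsub hx).2 hfx

lemma IsFacet.eq_of_eq {f : E → ℝ} (hlin : IsLinearMap ℝ f)
    (hf : IsFacet P f c) (hne : ∃ x ∈ P, f x = c) (hfg : ∀ x ∈ P, f x = c → g x = d)
    (hproper : ∃ x ∈ P, g x ≠ d) {y : E} (hy : y ∈ P) (hgy : g y = d) : f y = c := by
  obtain ⟨f, rfl⟩ : ∃ f' : E →ₗ[ℝ] ℝ, ⇑f' = f := ⟨hlin.mk' f, rfl⟩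
  obtain ⟨x₀, hx₀, hfx₀⟩ := hne
  obtain ⟨x₁, hx₁, hgx₁⟩ := hproper
  obtain ⟨hvalid, hrank⟩ := hf
  have hgx₀ := hfg x₀ hx₀ hfx₀
  rw [direction_affineSpan, direction_affineSpan] at hrank
  set V := vectorSpan ℝ P with hV
  set W := vectorSpan ℝ {x ∈ convexHull ℝ P | f x = c}
  have : FiniteDimensional ℝ V := FiniteDimensional.of_finrank_pos (by omega)
  have hWV : W ≤ V := by
    rw [hV, ← direction_affineSpan, ← affineSpan_convexHull, direction_affineSpan]
    exact vectorSpan_mono ℝ (Set.sep_subset _ _)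
  have hWg : W ≤ LinearMap.ker g :=
    vectorSpan_le_ker fun x hx ↦ eq_of_mem_convexHull_of_eq hvalid hfg hx.1 hx.2
  have hWf : W ≤ LinearMap.ker f := vectorSpan_le_ker fun x hx ↦ hx.2
  have hlt : V ⊓ LinearMap.ker g < V := by
    refine inf_lt_left.2 fun hle ↦ hgx₁ ?_
    have := hle (vsub_mem_vectorSpan ℝ hx₁ hx₀)
    simpa [hgx₀, sub_eq_zero] using this
  have : FiniteDimensional ℝ ↥(V ⊓ LinearMap.ker g) := Submodule.finiteDimensional_inf_left _ _
  have hWeq : W = V ⊓ LinearMap.ker g :=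
    Submodule.eq_of_le_of_finrank_le (le_inf hWV hWg)
      (by have := Submodule.finrank_lt_finrank_of_lt hlt; omega)
  have hyW : y - x₀ ∈ W := by
    rw [hWeq]
    exact ⟨vsub_mem_vectorSpan ℝ hy hx₀, by simp [hgy, hgx₀]⟩
  simpa [hfx₀, sub_eq_zero] using hWf hyW

end Facet

section Counting

variable {α : Type*} [DecidableEq α]

lemma prod_one_sub_ite_mem {R : Type*} [CommRing R] (T A : Finset α) :
    ∏ j ∈ A, (1 - if j ∈ T then (1 : R) else 0) = if Disjoint T A then 1 else 0 := by
  have hterm (j : α) : (1 - if j ∈ T then (1 : R) else 0) = if j ∉ T then 1 else 0 := by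
    split_ifs <;> simp_all
  simp only [hterm, prod_ite_zero, prod_const_one, disjoint_right]

lemma card_union_sdiff_add_card_le [Fintype α] (A B T : Finset α) :
    #(A ∪ B \ T) + #T ≤ Fintype.card α + #(A ∩ T) := by
  have hdisj : Disjoint (A ∪ B \ T) (T \ A) := by
    rw [disjoint_left]
    simp only [mem_union, mem_sdiff]
    tauto
  have hle := card_le_univ ((A ∪ B \ T) ∪ (T \ A))
  rw [card_union_of_disjoint hdisj] at hle
  have hT := card_sdiff_add_card_inter T A
  rw [inter_comm] at hT
  omega

lemma sum_Icc_sub_pred {G : Type*} [AddCommGroup G] (c : ℕ → G) {p m : ℕ} (h : p ≤ m) :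
    ∑ i ∈ Icc (p + 1) m, (c i - c (i - 1)) = c m - c p := by
  induction m, h using Nat.le_induction with
  | base => simp
  | succ k hk ih => rw [sum_Icc_succ_top (by omega), ih, Nat.add_sub_cancel]; abel

end Counting

section MixGe

variable {n m l u p : ℕ} {S : Fin m → Finset (Fin n)} {S' T : Finset (Fin n)}

lemma SS_mono (hS : Monotone S) : Monotone (SS n m S) := by
  intro a b hab
  by_cases hb : b ≤ m
  · rcases Nat.eq_zero_or_pos a with rfl | ha
    · simp [SS]
    · simp only [SS, dif_pos (show 1 ≤ a ∧ a ≤ m by omega), dif_pos (show 1 ≤ b ∧ b ≤ m by omega)]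
      exact hS (Fin.mk_le_mk.2 (by omega))
  · simp [SS, hb, show b ≠ 0 by omega]

lemma isLinearMap_dd {k : ℕ} (hk : 1 ≤ k) : IsLinearMap ℝ fun δ : Fin m → ℝ ↦ dd m δ k := by
  by_cases hkm : k ≤ m
  · simpa [dd, hk, hkm] using (LinearMap.proj (R := ℝ) (φ := fun _ ↦ ℝ) _).isLinear
  · simpa [dd, hkm, show k ≠ 0 by omega] using IsLinearMap.mk (by simp) (by simp)

lemma isLinearMap_mixGeLHS (hp1 : 1 ≤ p) : IsLinearMap ℝ (mixGeLHS n m l S p S') := by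
  have hIcc {i : ℕ} (hi : i ∈ Icc (p + 1) m) : 1 ≤ i := by grind
  constructor
  · intro x y
    have hsum := sum_congr rfl fun i hi ↦ congrArg
      ((#(S' ∪ SS n m S i) - #(S' ∪ SS n m S (i - 1)) : ℝ) * ·)
      ((isLinearMap_dd (hIcc hi)).map_add x.2 y.2)
    simp only [mixGeLHS, Prod.fst_add, Prod.snd_add, (isLinearMap_dd hp1).map_add, hsum,
      Pi.add_apply, mul_add, sum_add_distrib]
    ring
  · intro a x
    have hsum := sum_congr rfl fun i hi ↦ congrArg
      ((#(S' ∪ SS n m S i) - #(S' ∪ SS n m S (i - 1)) : ℝ) * ·)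
      ((isLinearMap_dd (hIcc hi)).map_smul a x.2)
    simp only [mixGeLHS, Prod.smul_fst, Prod.smul_snd, (isLinearMap_dd hp1).map_smul, hsum,
      Pi.smul_apply, smul_eq_mul, mul_left_comm _ a, ← mul_sum]
    ring

/-- The point `(z, δ)` of the multilinear set in which `z` is the indicator vector of `T`. -/
def incidencePoint (S : Fin m → Finset (Fin n)) (T : Finset (Fin n)) :
    (Fin n → ℝ) × (Fin m → ℝ) :=
  (fun j ↦ if j ∈ T then 1 else 0, fun i ↦ if Disjoint T (S i) then 1 else 0)

lemma mem_Xset_iff {x : (Fin n → ℝ) × (Fin m → ℝ)} :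
    x ∈ Xset n m l u S ↔ ∃ T, l ≤ #T ∧ #T ≤ u ∧ incidencePoint S T = x := by
  constructor
  · obtain ⟨z, δ⟩ := x
    rintro ⟨hz, -, hδ, hl, hu⟩
    dsimp only at hz hδ hl hu
    obtain ⟨T, rfl⟩ : ∃ T : Finset (Fin n), (fun j ↦ if j ∈ T then 1 else 0) = z := by
      refine ⟨univ.filter (z · = 1), funext fun j ↦ ?_⟩
      rcases hz j with h | h <;> simp [h]
    refine ⟨T, by simpa using hl, by simpa using hu, Prod.ext rfl (funext fun i ↦ ?_)⟩
    simp only [incidencePoint, hδ, prod_one_sub_ite_mem]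
  · rintro ⟨T, hl, hu, rfl⟩
    refine ⟨fun j ↦ ?_, fun i ↦ ?_, fun i ↦ (prod_one_sub_ite_mem T (S i)).symm, ?_, ?_⟩
    · exact (ite_eq_or_eq (j ∈ T) (1 : ℝ) 0).symm
    · exact (ite_eq_or_eq (Disjoint T (S i)) (1 : ℝ) 0).symm
    · simpa [incidencePoint] using hl
    · simpa [incidencePoint] using hu

lemma dd_incidencePoint {k : ℕ} (hk : k ≤ m) :
    dd m (incidencePoint S T).2 k = if Disjoint T (SS n m S k) then 1 else 0 := by
  rcases Nat.eq_zero_or_pos k with rfl | hk1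
  · simp [dd, SS]
  · simp [dd, SS, incidencePoint, hk, Nat.one_le_iff_ne_zero.2 hk1.ne']

lemma mixGeLHS_incidencePoint_of_not_disjoint (hS : Monotone S) (hpm : p ≤ m)
    (hT : ¬ Disjoint T (SS n m S p)) :
    mixGeLHS n m l S p S' (incidencePoint S T) = -#(S' ∩ T) := by
  have hdd {i : ℕ} (hpi : p ≤ i) (him : i ≤ m) : dd m (incidencePoint S T).2 i = 0 := by
    rw [dd_incidencePoint him, if_neg fun h ↦ hT (h.mono_right (SS_mono hS hpi))]
  have hsum : ∑ i ∈ Icc (p + 1) m, ((#(S' ∪ SS n m S i) : ℝ) - #(S' ∪ SS n m S (i - 1))) *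
      dd m (incidencePoint S T).2 i = 0 :=
    sum_eq_zero fun i hi ↦ by
      obtain ⟨hpi, him⟩ := mem_Icc.1 hi
      rw [hdd (by omega) him, mul_zero]
  rw [mixGeLHS, hdd le_rfl hpm, hsum]
  simp [incidencePoint]

lemma mixGeLHS_incidencePoint_eq_zero_iff_of_not_disjoint (hS : Monotone S) (hpm : p ≤ m)
    (hT : ¬ Disjoint T (SS n m S p)) :
    mixGeLHS n m l S p S' (incidencePoint S T) = 0 ↔ Disjoint S' T := by
  rw [mixGeLHS_incidencePoint_of_not_disjoint hS hpm hT, neg_eq_zero, Nat.cast_eq_zero,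
    card_eq_zero, disjoint_iff_inter_eq_empty]

lemma mixGeLHS_incidencePoint_le_of_disjoint (hS : Monotone S) (hpm : p ≤ m)
    (hT : Disjoint T (SS n m S p)) :
    mixGeLHS n m l S p S' (incidencePoint S T) ≤ l - #T := by
  -- Deleting `T` from each `S_i` keeps the increments with `δ_i = 1` and makes the sum telescope.
  set c : ℕ → ℝ := fun i ↦ #(S' ∪ SS n m S i \ T) with hc
  have hc_eq {i : ℕ} (hi : Disjoint T (SS n m S i)) : (#(S' ∪ SS n m S i) : ℝ) = c i := by
    simp only [hc, sdiff_eq_self_of_disjoint hi.symm]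
  have hc_mono : Monotone c := fun i j hij ↦ Nat.cast_le.2 <| card_le_card <|
    union_subset_union_right <| sdiff_subset_sdiff (SS_mono hS hij) subset_rfl
  have hsum : ∑ i ∈ Icc (p + 1) m, ((#(S' ∪ SS n m S i) : ℝ) - #(S' ∪ SS n m S (i - 1))) *
      dd m (incidencePoint S T).2 i ≤ c m - c p := by
    rw [← sum_Icc_sub_pred c hpm]
    refine sum_le_sum fun i hi ↦ ?_
    rw [dd_incidencePoint (mem_Icc.1 hi).2]
    split_ifs with h
    · rw [mul_one, hc_eq h, hc_eq (h.mono_right (SS_mono hS (Nat.sub_le i 1)))]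
    · simpa using hc_mono (Nat.sub_le i 1)
  have hcm : c m + #T ≤ n + (#(S' ∩ T) : ℝ) := by
    have := card_union_sdiff_add_card_le S' (SS n m S m) T
    rw [Fintype.card_fin] at this
    simp only [hc]
    exact_mod_cast this
  have hz : ∑ j ∈ S', (incidencePoint S T).1 j = #(S' ∩ T) := by simp [incidencePoint]
  rw [mixGeLHS, dd_incidencePoint hpm, if_pos hT, hc_eq hT, hz]
  linarith

lemma notMem_of_mixGeLHS_incidencePoint_eq_zero (hS : Monotone S) (hpm : p ≤ m) {j : Fin n}
    (hjS' : j ∈ S') (hjp : j ∈ SS n m S p)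
    (hT : mixGeLHS n m l S p S' (incidencePoint S T) = 0) : j ∉ T := by
  intro hjT
  rw [mixGeLHS_incidencePoint_eq_zero_iff_of_not_disjoint hS hpm
    (not_disjoint_iff.2 ⟨j, hjT, hjp⟩)] at hT
  exact disjoint_left.1 hT hjS' hjT

lemma card_le_of_mixGeLHS_incidencePoint_eq_zero (hS : Monotone S) (hpm : p ≤ m)
    (hS' : n ≤ #S' + l) (hT : mixGeLHS n m l S p S' (incidencePoint S T) = 0) : #T ≤ l := by
  by_cases hTp : Disjoint T (SS n m S p)
  · have hle := mixGeLHS_incidencePoint_le_of_disjoint (l := l) (S' := S') hS hpm hTp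
    rw [hT, sub_nonneg] at hle
    exact_mod_cast hle
  · rw [mixGeLHS_incidencePoint_eq_zero_iff_of_not_disjoint hS hpm hTp] at hT
    have hunion : #S' + #T ≤ n := by
      simpa [card_union_of_disjoint hT] using card_le_univ (S' ∪ T)
    omega

lemma exists_mixGeLHS_incidencePoint_eq_zero (hS : Monotone S) (hpm : p ≤ m)
    (hlu : l < u) (hcard : #S' + l ≤ n) (hSp : ¬ SS n m S p ⊆ S') :
    ∃ T, l ≤ #T ∧ #T ≤ u ∧ mixGeLHS n m l S p S' (incidencePoint S T) = 0 := by
  obtain ⟨j, hjp, hjS'⟩ := not_subset.1 hSp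
  have hcompl : #S' + #S'ᶜ = n := by simp
  have hpos : 0 < #S'ᶜ := card_pos.2 ⟨j, mem_compl.2 hjS'⟩
  obtain ⟨T, hjT, hTS', hTcard⟩ := exists_subsuperset_card_eq (n := max l 1)
    (singleton_subset_iff.2 (mem_compl.2 hjS')) (by simp) (by omega)
  have hTp : ¬ Disjoint T (SS n m S p) := not_disjoint_iff.2 ⟨j, singleton_subset_iff.1 hjT, hjp⟩
  exact ⟨T, by omega, by omega,
    (mixGeLHS_incidencePoint_eq_zero_iff_of_not_disjoint hS hpm hTp).2
      (le_compl_iff_disjoint_left.1 hTS')⟩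

lemma disjoint_of_isFacet_mixGeLHS_of_eq (hS : Monotone S) (hp1 : 1 ≤ p) (hpm : p ≤ m)
    (hlu : l < u) (hfacet : IsFacet (Xset n m l u S) (mixGeLHS n m l S p S') 0)
    (hcard : #S' + l ≤ n) (hSp : ¬ SS n m S p ⊆ S')
    {g : (Fin n → ℝ) × (Fin m → ℝ) →ₗ[ℝ] ℝ} {d : ℝ}
    (hface : ∀ T, l ≤ #T → mixGeLHS n m l S p S' (incidencePoint S T) = 0 →
      g (incidencePoint S T) = d)
    (hproper : ∃ T, l ≤ #T ∧ #T ≤ u ∧ g (incidencePoint S T) ≠ d)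
    (hl : l ≤ #T) (hu : #T ≤ u) (hT : ¬ Disjoint T (SS n m S p))
    (hgT : g (incidencePoint S T) = d) : Disjoint S' T := by
  have hmem {T : Finset (Fin n)} (hl : l ≤ #T) (hu : #T ≤ u) :
      incidencePoint S T ∈ Xset n m l u S := mem_Xset_iff.2 ⟨T, hl, hu, rfl⟩
  obtain ⟨T₀, hl₀, hu₀, hT₀⟩ := exists_mixGeLHS_incidencePoint_eq_zero hS hpm hlu hcard hSp
  obtain ⟨T₁, hl₁, hu₁, hT₁⟩ := hproper
  rw [← mixGeLHS_incidencePoint_eq_zero_iff_of_not_disjoint (l := l) hS hpm hT]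
  refine hfacet.eq_of_eq (isLinearMap_mixGeLHS hp1) ⟨_, hmem hl₀ hu₀, hT₀⟩ ?_
    ⟨_, hmem hl₁ hu₁, hT₁⟩ (hmem hl hu) hgT
  intro x hx hfx
  obtain ⟨T, hl, -, rfl⟩ := mem_Xset_iff.1 hx
  exact hface T hl hfx

theorem disjoint_of_isFacet_mixGeLHS (hS : Monotone S) (hp1 : 1 ≤ p) (hpm : p ≤ m)
    (hlu : l < u) (hfacet : IsFacet (Xset n m l u S) (mixGeLHS n m l S p S') 0)
    (hcard : #S' + l ≤ n) (hSp : ¬ SS n m S p ⊆ S')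
    (hu : 2 ≤ u) (hS' : ¬ S' ⊆ SS n m S p) :
    Disjoint S' (SS n m S p) := by
  by_contra hne
  obtain ⟨j, hjS', hjp⟩ := not_disjoint_iff.1 hne
  obtain ⟨j₀, hj₀p, hj₀S'⟩ := not_subset.1 hSp
  obtain ⟨j₁, hj₁S', hj₁p⟩ := not_subset.1 hS'
  have hS'pos : 0 < #S' := card_pos.2 ⟨j, hjS'⟩
  have hsub : {j₀, j₁} ⊆ univ.erase j := by grind
  have herase : #(univ.erase j) = n - 1 := by simp
  have hpair : #{j₀, j₁} = 2 := card_pair (by grind)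
  have hpair_le := card_le_card hsub
  obtain ⟨T₁, hjT₁, hT₁card⟩ := exists_superset_card_eq (s := {j}) (n := max l 1)
    (by simp) (by rw [Fintype.card_fin]; omega)
  obtain ⟨T₂, hT₂, hjT₂, hT₂card⟩ := exists_subsuperset_card_eq (n := max l 2)
    hsub (by omega) (by omega)
  have hj₀T₂ : j₀ ∈ T₂ := hT₂ (by simp)
  have hj₁T₂ : j₁ ∈ T₂ := hT₂ (by simp)
  let g : (Fin n → ℝ) × (Fin m → ℝ) →ₗ[ℝ] ℝ := LinearMap.proj j ∘ₗ LinearMap.fst ℝ _ _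
  have hg (T : Finset (Fin n)) : g (incidencePoint S T) = if j ∈ T then 1 else 0 := rfl
  have hface (T : Finset (Fin n)) (hT : mixGeLHS n m l S p S' (incidencePoint S T) = 0) :
      g (incidencePoint S T) = 0 := by
    rw [hg, if_neg (notMem_of_mixGeLHS_incidencePoint_eq_zero hS hpm hjS' hjp hT)]
  have hT₂disj : Disjoint S' T₂ :=
    disjoint_of_isFacet_mixGeLHS_of_eq hS hp1 hpm hlu hfacet hcard hSp (g := g) (d := 0)
      (fun T _ ↦ hface T) ⟨T₁, by omega, by omega, by simp [hg, singleton_subset_iff.1 hjT₁]⟩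
      (by omega) (by omega) (not_disjoint_iff.2 ⟨j₀, hj₀T₂, hj₀p⟩)
      (by rw [hg, if_neg fun h ↦ notMem_erase j univ (hjT₂ h)])
  exact disjoint_left.1 hT₂disj hj₁S' hj₁T₂

theorem card_add_lt_of_isFacet_mixGeLHS (hS : Monotone S) (hp1 : 1 ≤ p) (hpm : p ≤ m)
    (hlu : l < u) (hfacet : IsFacet (Xset n m l u S) (mixGeLHS n m l S p S') 0)
    (hcard : #S' + l ≤ n) (hSp : ¬ SS n m S p ⊆ S')
    (hl : 2 ≤ l) (hS' : S'.Nonempty) :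
    #S' + l < n := by
  by_contra hge
  obtain ⟨j₀, hj₀p, -⟩ := not_subset.1 hSp
  obtain ⟨j₁, hj₁S'⟩ := hS'
  have hS'pos : 0 < #S' := card_pos.2 ⟨j₁, hj₁S'⟩
  obtain ⟨T₁, -, hT₁card⟩ := exists_superset_card_eq (s := (∅ : Finset (Fin n))) (n := l + 1)
    (by simp) (by rw [Fintype.card_fin]; omega)
  obtain ⟨T₂, hT₂, hT₂card⟩ := exists_superset_card_eq (s := {j₀, j₁}) (n := l)
    (card_le_two.trans hl) (by rw [Fintype.card_fin]; omega)
  have hj₀T₂ : j₀ ∈ T₂ := hT₂ (by simp)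
  have hj₁T₂ : j₁ ∈ T₂ := hT₂ (by simp)
  let g : (Fin n → ℝ) × (Fin m → ℝ) →ₗ[ℝ] ℝ := (∑ j, LinearMap.proj j) ∘ₗ LinearMap.fst ℝ _ _
  have hg (T : Finset (Fin n)) : g (incidencePoint S T) = #T := by simp [g, incidencePoint]
  have hface (T : Finset (Fin n)) (hlT : l ≤ #T)
      (hT : mixGeLHS n m l S p S' (incidencePoint S T) = 0) : g (incidencePoint S T) = l := by
    have hTl := card_le_of_mixGeLHS_incidencePoint_eq_zero hS hpm (by omega) hT
    rw [hg, le_antisymm hTl hlT]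
  have hT₂disj : Disjoint S' T₂ :=
    disjoint_of_isFacet_mixGeLHS_of_eq hS hp1 hpm hlu hfacet hcard hSp hface
      ⟨T₁, by omega, by omega, by simp [hg, hT₁card]⟩
      (by omega) (by omega) (not_disjoint_iff.2 ⟨j₀, hj₀T₂, hj₀p⟩) (by rw [hg, hT₂card])
  exact disjoint_left.1 hT₂disj hj₁S' hj₁T₂

theorem stmt16_general (hlu : l < u) (hu : 2 ≤ u) (hS : Monotone S) (hp1 : 1 ≤ p) (hpm : p ≤ m)
    (hSp_two : 2 ≤ #(SS n m S p)) (hSp_card : l ≤ n - #(SS n m S p)) (hS'_card : #S' ≤ n - l)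
    (hunion : n - l < #(S' ∪ SS n m S p))
    (hfacet : IsFacet (Xset n m l u S) (mixGeLHS n m l S p S') 0) :
    S' ∩ SS n m S p = ∅ ∧ #S' ≤ n - l - 1 := by
  have hSp_le : #(SS n m S p) ≤ n := by simpa using card_le_univ (SS n m S p)
  have hcard : #S' + l ≤ n := by omega
  have hSp : ¬ SS n m S p ⊆ S' := fun h ↦ by rw [union_eq_left.2 h] at hunion; omega
  have hS' : ¬ S' ⊆ SS n m S p := fun h ↦ by rw [union_eq_right.2 h] at hunion; omega
  have hdisj := disjoint_of_isFacet_mixGeLHS hS hp1 hpm hlu hfacet hcard hSp hu hS'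
  refine ⟨disjoint_iff_inter_eq_empty.1 hdisj, ?_⟩
  by_contra hlarge
  have hsum_le : #S' + #(SS n m S p) ≤ n := by
    simpa [card_union_of_disjoint hdisj] using card_le_univ (S' ∪ SS n m S p)
  have := card_add_lt_of_isFacet_mixGeLHS hS hp1 hpm hlu hfacet hcard hSp (by omega)
    (nonempty_iff_ne_empty.2 fun h ↦ hS' (h ▸ empty_subset _))
  omega

end MixGe

theorem stmt16 (n m l u : ℕ) (S : Fin m → Finset (Fin n))
    (hn : 0 < n) (hm : 0 < m) (hu : 2 ≤ u) (hlu : l < u)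
    (hnested : ∀ i j : Fin m, i < j → S i ⊂ S j)
    (hS1 : 2 ≤ (SS n m S 1).card)
    (hSm : l ≤ n - (SS n m S m).card)
    (p : ℕ) (hp1 : 1 ≤ p) (hpm : p ≤ m)
    (S' : Finset (Fin n)) (hS'ne : S' ≠ Finset.univ)
    (h1 : (S' ∪ SS n m S (p - 1)).card ≤ n - l)
    (h2 : n - l < (S' ∪ SS n m S p).card)
    (hfacet : IsFacet (Xset n m l u S) (mixGeLHS n m l S p S') 0) :
    S' ∩ SS n m S p = ∅ ∧ S'.card ≤ n - l - 1 := by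
  have hS : Monotone S := StrictMono.monotone hnested
  exact stmt16_general hlu hu hS hp1 hpm
    (hS1.trans (card_le_card (SS_mono hS hp1)))
    (hSm.trans (Nat.sub_le_sub_left (card_le_card (SS_mono hS hpm)) n))
    ((card_le_card subset_union_left).trans h1) h2 hfacet
end
end
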